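/- Assume π(x) = li(x) + O(x/log³ x). Then ∑_{2 ≤ n ≤ x} 1/π(n) − ∑_{3 ≤ n ≤ x} 1/li(n) converges to a finite limit as x → ∞, i.e. the difference equals a constant plus o(1). -/

import Mathlib

open Filter Real

noncomputable def li (x : ℝ) : ℝ := ∫ t in (2:ℝ)..x, 1 / Real.log t

noncomputable def primePi (x : ℝ) : ℝ := Nat.primeCounting ⌊x⌋₊

open MeasureTheory Set Topology Polynomial in
lemma exists_polynomial_setIntegral_abs_sub_le {q : ℝ → ℝ} (hq : IntegrableOn q (Ioo 0 1))
    {η : ℝ} (hη : 0 < η) :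
    ∃ Q : ℝ[X], ∫ y in Ioo (0 : ℝ) 1, |q y - Q.eval y| ≤ η := by
  obtain ⟨g, -, hg, hgc, hgi⟩ :=
    Integrable.exists_hasCompactSupport_integral_sub_le hq (half_pos hη)
  obtain ⟨Q, hQ⟩ := exists_polynomial_near_of_continuousOn 0 1 g hgc.continuousOn _ (half_pos hη)
  have hQi : IntegrableOn (fun y ↦ Q.eval y) (Ioo (0 : ℝ) 1) :=
    (Q.continuous.integrableOn_Icc (a := 0) (b := 1)).mono_set Ioo_subset_Icc_self
  refine ⟨Q, ?_⟩
  calc ∫ y in Ioo (0 : ℝ) 1, |q y - Q.eval y|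
      ≤ ∫ y in Ioo (0 : ℝ) 1, (‖q y - g y‖ + η / 2) := by
        refine setIntegral_mono_on (hq.sub hQi).abs ?_ measurableSet_Ioo fun y hy ↦ ?_
        · exact (hq.sub hgi).norm.add (integrableOn_const (by simp))
        · have h1 := hQ y (Ioo_subset_Icc_self hy)
          have h2 := abs_sub_le (q y) (g y) (Q.eval y)
          rw [abs_sub_comm (g y)] at h2
          rw [Real.norm_eq_abs]
          linarith
    _ = (∫ y in Ioo (0 : ℝ) 1, ‖q y - g y‖) + η / 2 := by
        have := integral_add (hq.sub hgi).norm
          (integrableOn_const (s := Ioo (0 : ℝ) 1) (C := η / 2) (μ := volume) (by simp))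
        simpa using this
    _ ≤ η := by linarith

open MeasureTheory Set Topology Polynomial in
lemma image_rpow_neg_Ioi_one {ε : ℝ} (hε : 0 < ε) :
    (fun t : ℝ ↦ t ^ (-ε)) '' Ioi 1 = Ioo 0 1 := by
  ext y
  constructor
  · rintro ⟨t, ht, rfl⟩
    have ht : (1 : ℝ) < t := ht
    exact ⟨by positivity, rpow_lt_one_of_one_lt_of_neg ht (by linarith)⟩
  · rintro ⟨h0, h1⟩
    refine ⟨y ^ (-ε⁻¹), one_lt_rpow_of_pos_of_lt_one_of_neg h0 h1 (by simpa using hε), ?_⟩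
    simp only
    rw [← rpow_mul h0.le]
    simp [hε.ne']

open MeasureTheory Set Topology Polynomial in
lemma injOn_rpow_neg_Ioi_one {ε : ℝ} (hε : 0 < ε) :
    InjOn (fun t : ℝ ↦ t ^ (-ε)) (Ioi 1) := by
  intro a ha b hb hab
  exact rpow_left_injOn (x := -ε) (by simpa using hε.ne')
    (show (0:ℝ) ≤ a from zero_le_one.trans (le_of_lt ha)) 
    (show (0:ℝ) ≤ b from zero_le_one.trans (le_of_lt hb)) hab

open MeasureTheory Set Topology Polynomial in
lemma integrableOn_and_integral_comp_rpow_neg {ε : ℝ} (hε : 0 < ε) {r : ℝ → ℝ}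
    (hr : IntegrableOn r (Ioo 0 1)) :
    IntegrableOn (fun t ↦ ε * t ^ (-ε - 1) * r (t ^ (-ε))) (Ioi 1) ∧
      ∫ t in Ioi (1 : ℝ), ε * t ^ (-ε - 1) * r (t ^ (-ε)) = ∫ y in Ioo (0 : ℝ) 1, r y := by
  have hd : ∀ t ∈ Ioi (1 : ℝ),
      HasDerivWithinAt (fun t : ℝ ↦ t ^ (-ε)) (-ε * t ^ (-ε - 1)) (Ioi 1) t := fun t ht ↦
    (hasDerivAt_rpow_const (Or.inl (zero_lt_one.trans ht).ne')).hasDerivWithinAt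
  have habs : ∀ t ∈ Ioi (1 : ℝ), |-ε * t ^ (-ε - 1)| • r (t ^ (-ε)) =
      ε * t ^ (-ε - 1) * r (t ^ (-ε)) := fun t ht ↦ by
    have : (0 : ℝ) < t := zero_lt_one.trans ht
    rw [neg_mul, abs_neg, abs_of_pos (by positivity), smul_eq_mul]
  constructor
  · rw [← integrableOn_congr_fun habs measurableSet_Ioi,
      ← integrableOn_image_iff_integrableOn_abs_deriv_smul measurableSet_Ioi hd
        (injOn_rpow_neg_Ioi_one hε), image_rpow_neg_Ioi_one hε]
    exact hr
  · rw [← setIntegral_congr_fun measurableSet_Ioi habs,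
      ← integral_image_eq_integral_abs_deriv_smul measurableSet_Ioi hd
        (injOn_rpow_neg_Ioi_one hε), image_rpow_neg_Ioi_one hε]

open MeasureTheory Set Topology Polynomial in
lemma tendsto_integral_mul_eval_rpow_neg {h : ℝ → ℝ} {L : ℝ}
    (hint : ∀ ε : ℝ, 0 < ε → IntegrableOn (fun t ↦ h t * t ^ (-ε)) (Ioi 1))
    (hlim : Tendsto (fun ε : ℝ ↦ ∫ t in Ioi 1, h t * t ^ (-ε)) (𝓝[>] 0) (𝓝 L)) (R : ℝ[X]) :
    (∀ ε : ℝ, 0 < ε → IntegrableOn (fun t ↦ h t * (t ^ (-ε) * R.eval (t ^ (-ε)))) (Ioi 1)) ∧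
      Tendsto (fun ε : ℝ ↦ ∫ t in Ioi 1, h t * (t ^ (-ε) * R.eval (t ^ (-ε)))) (𝓝[>] 0)
        (𝓝 (L * R.eval 1)) := by
  induction R using Polynomial.induction_on' with
  | add p q hp hq =>
    have key : ∀ ε t : ℝ, h t * (t ^ (-ε) * (p + q).eval (t ^ (-ε))) =
        h t * (t ^ (-ε) * p.eval (t ^ (-ε))) + h t * (t ^ (-ε) * q.eval (t ^ (-ε))) := by
      intro ε t
      rw [eval_add]
      ring
    simp_rw [key]
    refine ⟨fun ε hε ↦ (hp.1 ε hε).add (hq.1 ε hε), ?_⟩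
    rw [eval_add, mul_add]
    refine (hp.2.add hq.2).congr' ?_
    filter_upwards [self_mem_nhdsWithin] with ε hε
    exact (integral_add (hp.1 ε hε) (hq.1 ε hε)).symm
  | monomial n a =>
    have key : ∀ ε : ℝ, EqOn (fun t ↦ h t * (t ^ (-ε) * (monomial n a).eval (t ^ (-ε))))
        (fun t ↦ a * (h t * t ^ (-((n + 1 : ℝ) * ε)))) (Ioi 1) := by
      intro ε t ht
      have ht0 : (0 : ℝ) < t := zero_lt_one.trans ht
      have : t ^ (-((n + 1 : ℝ) * ε)) = t ^ (-ε) * (t ^ (-ε)) ^ n := by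
        rw [← pow_succ', ← rpow_natCast, ← rpow_mul ht0.le]
        push_cast
        ring_nf
      simp only [eval_monomial, this]
      ring
    have hn : (0 : ℝ) < n + 1 := by positivity
    refine ⟨fun ε hε ↦ ?_, ?_⟩
    · rw [integrableOn_congr_fun (key ε) measurableSet_Ioi]
      exact (hint _ (mul_pos hn hε)).const_mul a
    · have hkey ε := setIntegral_congr_fun (μ := volume) measurableSet_Ioi (key ε)
      simp_rw [hkey, integral_const_mul]
      rw [eval_monomial, one_pow, mul_one, mul_comm]
      refine (hlim.comp (tendsto_nhdsWithin_iff.mpr ⟨?_, ?_⟩)).const_mul a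
      · have : Tendsto (fun ε : ℝ ↦ (n + 1 : ℝ) * ε) (𝓝 0) (𝓝 ((n + 1 : ℝ) * 0)) :=
          tendsto_id.const_mul _
        rw [mul_zero] at this
        exact this.mono_left nhdsWithin_le_nhds
      · filter_upwards [self_mem_nhdsWithin] with ε hε using mul_pos hn hε

open MeasureTheory Set Topology Polynomial in
/-- The Tauberian theorem of Littlewood in Mellin transform form, proved by the method of Karamata. -/
theorem tendsto_setIntegral_of_tendsto_mellin {h : ℝ → ℝ} {L C : ℝ}
    (hint : ∀ ε : ℝ, 0 < ε → IntegrableOn (fun t ↦ h t * t ^ (-ε)) (Ioi 1))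
    (hbound : ∀ t > 1, |h t| ≤ C / (t * log t))
    (hlim : Tendsto (fun ε : ℝ ↦ ∫ t in Ioi 1, h t * t ^ (-ε)) (𝓝[>] 0) (𝓝 L)) :
    Tendsto (fun T : ℝ ↦ ∫ t in Ioc 1 T, h t) atTop (𝓝 L) := by
  have hC : 0 ≤ C := by
    have h1 := (abs_nonneg _).trans (hbound (exp 1) (by simp))
    rw [log_exp, mul_one] at h1
    exact (div_nonneg_iff.mp h1).elim And.left fun h2 ↦ absurd h2.2 (not_le.mpr (exp_pos 1))
  set q : ℝ → ℝ := fun y ↦ if exp (-1) ≤ y then 1 / y else -1 / (1 - y) with hq_def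
  have hqm : Measurable q :=
    Measurable.ite measurableSet_Ici (by fun_prop) (by fun_prop)
  have hexp : exp (-1) < 1 := by simp
  have hq : IntegrableOn q (Ioo 0 1) := by
    refine Measure.integrableOn_of_bounded (M := exp 1 + 1 / (1 - exp (-1))) (by simp)
      hqm.aestronglyMeasurable ?_
    refine (ae_restrict_iff' measurableSet_Ioo).mpr (Eventually.of_forall fun y hy ↦ ?_)
    have h1 : 0 < 1 / (1 - exp (-1)) := by
      have : 0 < 1 - exp (-1) := by linarith
      positivity
    simp only [hq_def]
    split_ifs with hc
    · rw [norm_of_nonneg (by have := hy.1; positivity)]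
      have : 1 / y ≤ 1 / exp (-1) := one_div_le_one_div_of_le (exp_pos _) hc
      rw [exp_neg, one_div, one_div, inv_inv] at this
      rw [one_div]
      rw [one_div, exp_neg] at h1
      rw [exp_neg, one_div]
      linarith
    · have h2 : 0 < 1 - exp (-1) := by linarith
      have h3 : 1 - exp (-1) < 1 - y := by linarith
      rw [norm_div, norm_neg, norm_one, norm_of_nonneg (by linarith)]
      have := one_div_le_one_div_of_le h2 h3.le
      linarith [exp_pos 1]
  rw [Metric.tendsto_nhds]
  intro δ hδ
  obtain ⟨Q, hQ⟩ := exists_polynomial_setIntegral_abs_sub_le hq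
    (η := δ / (2 * (C + 1))) (by positivity)
  set R : ℝ[X] := 1 + (1 - X) * Q with hR
  obtain ⟨hRi, hRl⟩ := tendsto_integral_mul_eval_rpow_neg hint hlim R
  have hR1 : R.eval 1 = 1 := by simp [hR]
  rw [hR1, mul_one] at hRl
  have hT : Tendsto (fun T : ℝ ↦ (log T)⁻¹) atTop (𝓝[>] 0) :=
    tendsto_inv_atTop_nhdsGT_zero.comp tendsto_log_atTop
  filter_upwards [hT.eventually (Metric.tendsto_nhds.mp hRl (δ / 2) (half_pos hδ)),
    eventually_gt_atTop 1] with T hT1 hT2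
  set ε := (log T)⁻¹ with hε_def
  have hlogT : 0 < log T := log_pos hT2
  have hε : 0 < ε := inv_pos.mpr hlogT
  have hQi : IntegrableOn (fun y ↦ |q y - Q.eval y|) (Ioo (0 : ℝ) 1) :=
    (hq.sub ((Q.continuous.integrableOn_Icc (a := 0) (b := 1)).mono_set Ioo_subset_Icc_self)).abs
  obtain ⟨hci, hce⟩ := integrableOn_and_integral_comp_rpow_neg hε hQi
  have hhi : IntegrableOn h (Ioc 1 T) := by
    have h1 : IntegrableOn (fun t ↦ h t * t ^ (-ε)) (Icc 1 T) :=
      (integrableOn_Icc_iff_integrableOn_Ioc (by simp)).mpr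
        ((hint ε hε).mono_set Ioc_subset_Ioi_self)
    have h2 : ContinuousOn (fun t : ℝ ↦ t ^ ε) (Icc 1 T) :=
      (continuous_id.rpow_const fun _ ↦ Or.inr hε.le).continuousOn
    refine ((h1.mul_continuousOn h2 isCompact_Icc).mono_set Ioc_subset_Icc_self).congr_fun ?_
      measurableSet_Ioc
    intro t ht
    have : (0 : ℝ) < t := zero_lt_one.trans ht.1
    simp only
    rw [mul_assoc, ← rpow_add this]
    simp
  have hkey : |(∫ t in Ioc 1 T, h t) - ∫ t in Ioi 1, h t * (t ^ (-ε) * R.eval (t ^ (-ε)))| ≤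
      C * (δ / (2 * (C + 1))) := by
    have h1 : ∫ t in Ioc 1 T, h t = ∫ t in Ioi 1, (Ioc 1 T).indicator h t := by
      rw [setIntegral_indicator measurableSet_Ioc,
        inter_eq_self_of_subset_right Ioc_subset_Ioi_self]
    rw [h1, ← integral_sub (hhi.integrable_indicator measurableSet_Ioc).integrableOn (hRi ε hε)]
    calc _ ≤ ∫ t in Ioi 1, C * (ε * t ^ (-ε - 1) * |q (t ^ (-ε)) - Q.eval (t ^ (-ε))|) := by
          rw [← Real.norm_eq_abs]
          refine norm_integral_le_of_norm_le (hci.const_mul C) ?_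
          refine (ae_restrict_iff' measurableSet_Ioi).mpr (Eventually.of_forall fun t ht ↦ ?_)
          have ht : (1 : ℝ) < t := ht
          have ht0 : (0 : ℝ) < t := by linarith
          have hlt : 0 < log t := log_pos ht
          have hy0 : 0 < t ^ (-ε) := by positivity
          have hy1 : t ^ (-ε) < 1 := rpow_lt_one_of_one_lt_of_neg ht (by linarith)
          have hy2 : 1 - t ^ (-ε) ≤ ε * log t := by
            rw [rpow_def_of_pos ht0]
            linarith [add_one_le_exp (log t * -ε)]
          have hmem : t ≤ T ↔ exp (-1) ≤ t ^ (-ε) := by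
            rw [rpow_def_of_pos ht0, exp_le_exp, hε_def, ← log_le_log_iff ht0 (by linarith)]
            rw [mul_neg, neg_le_neg_iff, ← div_eq_mul_inv, div_le_one hlogT]
          have hdec : (Ioc 1 T).indicator h t - h t * (t ^ (-ε) * R.eval (t ^ (-ε))) =
              h t * (t ^ (-ε) * (1 - t ^ (-ε)) * (q (t ^ (-ε)) - Q.eval (t ^ (-ε)))) := by
            have hy3 : 1 - t ^ (-ε) ≠ 0 := by linarith
            simp only [hR, eval_add, eval_one, eval_mul, eval_sub, eval_X, hq_def]
            by_cases hc : t ≤ T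
            · rw [indicator_of_mem (show t ∈ Ioc 1 T from ⟨ht, hc⟩), if_pos (hmem.mp hc)]
              field_simp
              ring
            · rw [indicator_of_notMem fun h ↦ hc h.2, if_neg (mt hmem.mpr hc)]
              field_simp
              ring
          rw [hdec, norm_mul, norm_mul, Real.norm_eq_abs, Real.norm_eq_abs, Real.norm_eq_abs,
            abs_of_pos (mul_pos hy0 (by linarith))]
          have hr : t ^ (-ε - 1) = t ^ (-ε) / t := by rw [rpow_sub_one ht0.ne']
          calc _ ≤ C / (t * log t) * (t ^ (-ε) * (ε * log t) *
                |q (t ^ (-ε)) - Q.eval (t ^ (-ε))|) := by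
                gcongr
                exact hbound t ht
            _ = _ := by
                rw [hr]
                field_simp
      _ ≤ C * (δ / (2 * (C + 1))) := by
          rw [integral_const_mul, hce]
          gcongr
  rw [Real.dist_eq] at hT1 ⊢
  have h3 : C * (δ / (2 * (C + 1))) ≤ δ / 2 := by
    rw [← mul_div_assoc, div_le_div_iff₀ (by positivity) (by positivity)]
    nlinarith
  have h4 := abs_sub_le (∫ t in Ioc 1 T, h t)
    (∫ t in Ioi 1, h t * (t ^ (-ε) * R.eval (t ^ (-ε)))) L
  linarith

open Topology ArithmeticFunction in
/-- The poles at `1` of `ζ` and of its negative logarithmic derivative cancel. -/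
lemma exists_analyticAt_neg_logDeriv_sub_riemannZeta :
    ∃ G : ℂ → ℂ, AnalyticAt ℂ G 1 ∧ ∀ s : ℂ, 1 < s.re →
      G s = -deriv riemannZeta s / riemannZeta s - riemannZeta s := by
  set g : ℂ → ℂ := DirichletCharacter.LFunctionTrivChar₁ 1 with hg
  have hgd : Differentiable ℂ g := DirichletCharacter.differentiable_LFunctionTrivChar₁ 1
  have hg1 : g 1 = 1 := by simp [hg, DirichletCharacter.LFunctionTrivChar₁]
  have hgan : AnalyticAt ℂ g 1 := hgd.analyticAt 1
  have hga : ∀ s ≠ 1, g s = (s - 1) * riemannZeta s := fun s hs ↦ by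
    simp [hg, DirichletCharacter.LFunctionTrivChar₁, Function.update_of_ne hs,
      DirichletCharacter.LFunctionTrivChar, DirichletCharacter.LFunction_modOne_eq]
  have hslope : AnalyticAt ℂ (dslope g 1) 1 :=
    ((Complex.differentiableOn_dslope univ_mem).mpr hgd.differentiableOn).analyticAt univ_mem
  refine ⟨fun s ↦ -deriv g s / g s - dslope g 1 s,
    ((hgan.deriv.neg).div hgan (by simp [hg1])).sub hslope, fun s hs ↦ ?_⟩
  have hs1 : s ≠ 1 := by
    rintro rfl
    simp at hs
  have hs2 : s - 1 ≠ 0 := sub_ne_zero.mpr hs1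
  have hz : riemannZeta s ≠ 0 := riemannZeta_ne_zero_of_one_lt_re hs
  have hd : deriv g s = riemannZeta s + (s - 1) * deriv riemannZeta s := by
    have h1 : g =ᶠ[𝓝 s] fun w ↦ (w - 1) * riemannZeta w := by
      filter_upwards [isOpen_ne.mem_nhds hs1] with w hw using hga w hw
    have h2 : HasDerivAt (fun w : ℂ ↦ w - 1) 1 s := (hasDerivAt_id s).sub_const 1
    rw [h1.deriv_eq, (h2.fun_mul (differentiableAt_riemannZeta hs1).hasDerivAt).deriv, one_mul]
  simp only
  rw [dslope_of_ne _ hs1, slope_def_field, hg1, hd, hga s hs1]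
  field_simp
  ring

open Topology ArithmeticFunction in
lemma LSeriesSummable_vonMangoldt_sub_one {s : ℂ} (hs : 1 < s.re) :
    LSeriesSummable (fun n ↦ (vonMangoldt n : ℂ) - 1) s :=
  (LSeriesSummable_vonMangoldt hs).sub (LSeriesHasSum_one hs).LSeriesSummable

open Topology ArithmeticFunction in
lemma abscissaOfAbsConv_vonMangoldt_sub_one_lt {s : ℂ} (hs : 1 < s.re) :
    LSeries.abscissaOfAbsConv (fun n ↦ (vonMangoldt n : ℂ) - 1) < s.re := by
  refine lt_of_le_of_lt (LSeries.abscissaOfAbsConv_le_of_forall_lt_LSeriesSummable (x := 1)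
    fun y hy ↦ LSeriesSummable_vonMangoldt_sub_one (by simpa using hy)) ?_
  exact_mod_cast hs

open Topology ArithmeticFunction in
lemma exists_tendsto_LSeries_logMul_vonMangoldt_sub_one :
    ∃ L : ℂ, Tendsto (fun s : ℝ ↦ LSeries (LSeries.logMul fun n ↦ (vonMangoldt n : ℂ) - 1) s)
      (𝓝[>] 1) (𝓝 L) := by
  obtain ⟨G, hG, hGeq⟩ := exists_analyticAt_neg_logDeriv_sub_riemannZeta
  refine ⟨-deriv G 1, ?_⟩
  have hc : Tendsto (fun s : ℝ ↦ -deriv G (s : ℂ)) (𝓝[>] 1) (𝓝 (-deriv G 1)) := by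
    have h1 : ContinuousAt (fun s : ℝ ↦ -deriv G (s : ℂ)) 1 :=
      ContinuousAt.comp (g := fun z ↦ -deriv G z) (by rw [Complex.ofReal_one]; exact hG.deriv.continuousAt.neg)
        Complex.continuous_ofReal.continuousAt
    simpa using h1.tendsto.mono_left nhdsWithin_le_nhds
  refine hc.congr' ?_
  filter_upwards [self_mem_nhdsWithin] with s hs
  have hs' : 1 < (s : ℂ).re := by simpa using hs
  have heq : LSeries (fun n ↦ (vonMangoldt n : ℂ) - 1) =ᶠ[𝓝 (s : ℂ)] G := by
    filter_upwards [(isOpen_lt continuous_const Complex.continuous_re).mem_nhds hs'] with z hz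
    rw [hGeq z hz, ← LSeries_vonMangoldt_eq_deriv_riemannZeta_div hz, ← LSeries_one_eq_riemannZeta hz]
    exact LSeries_sub (LSeriesSummable_vonMangoldt hz) (LSeriesHasSum_one hz).LSeriesSummable
  rw [← heq.deriv_eq, (LSeries_hasDerivAt (abscissaOfAbsConv_vonMangoldt_sub_one_lt hs')).deriv,
    neg_neg]

open Topology ArithmeticFunction MeasureTheory Asymptotics in
lemma exists_tendsto_mellin_sum_vonMangoldt_sub_one_mul_log
    (hB : (fun t : ℝ ↦ ∑ k ∈ Finset.Icc 1 ⌊t⌋₊, (vonMangoldt k - 1) * Real.log k) =O[atTop]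
      fun t : ℝ ↦ t) :
    ∃ L : ℝ, Tendsto (fun ε : ℝ ↦ ∫ t in Set.Ioi (1 : ℝ),
      (∑ k ∈ Finset.Icc 1 ⌊t⌋₊, (vonMangoldt k - 1) * Real.log k) / t ^ 2 * t ^ (-ε)) (𝓝[>] 0) (𝓝 L) := by
  obtain ⟨L, hL⟩ := exists_tendsto_LSeries_logMul_vonMangoldt_sub_one
  refine ⟨L.re, ?_⟩
  set c : ℕ → ℂ := LSeries.logMul fun n ↦ (vonMangoldt n : ℂ) - 1 with hc
  have hcr : ∀ k, c k = (((vonMangoldt k - 1) * Real.log k : ℝ) : ℂ) := fun k ↦ by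
    rw [hc, LSeries.logMul, ← Complex.natCast_log]
    push_cast
    ring
  have hO : (fun n ↦ ∑ k ∈ Finset.Icc 1 n, c k) =O[atTop] fun n ↦ (n : ℝ) ^ (1 : ℝ) := by
    have h1 := (hB.comp_tendsto tendsto_natCast_atTop_atTop)
    simp only [Function.comp_def, Nat.floor_natCast] at h1
    simp only [rpow_one, hcr, ← Complex.ofReal_sum]
    exact (Complex.isBigO_ofReal_left).mpr h1
  have hlim : Tendsto (fun ε : ℝ ↦ (LSeries c ((1 + ε : ℝ) : ℂ)).re / (1 + ε)) (𝓝[>] 0)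
      (𝓝 L.re) := by
    have h1 : Tendsto (fun ε : ℝ ↦ 1 + ε) (𝓝[>] 0) (𝓝[>] 1) := by
      refine tendsto_nhdsWithin_iff.mpr ⟨?_, ?_⟩
      · have : Tendsto (fun ε : ℝ ↦ 1 + ε) (𝓝 0) (𝓝 (1 + 0)) := tendsto_id.const_add 1
        rw [add_zero] at this
        exact this.mono_left nhdsWithin_le_nhds
      · filter_upwards [self_mem_nhdsWithin] with ε hε
        simpa using hε
    have h2 := ((Complex.continuous_re.tendsto L).comp (hL.comp h1)).div
      (h1.mono_right nhdsWithin_le_nhds) one_ne_zero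
    exact h2.congr' (Eventually.of_forall fun ε ↦ rfl) |>.trans (by simp)
  refine hlim.congr' ?_
  filter_upwards [self_mem_nhdsWithin] with ε hε
  have hε : 0 < ε := hε
  have hs : 1 < ((1 + ε : ℝ) : ℂ).re := by simpa using hε
  rw [LSeries_eq_mul_integral c zero_le_one hs
    (LSeriesSummable_logMul_of_lt_re (abscissaOfAbsConv_vonMangoldt_sub_one_lt hs)) hO]
  have h3 : ∫ t in Set.Ioi (1 : ℝ), (∑ k ∈ Finset.Icc 1 ⌊t⌋₊, c k) *
        (t : ℂ) ^ (-(((1 + ε : ℝ) : ℂ) + 1)) =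
      ((∫ t in Set.Ioi (1 : ℝ), (∑ k ∈ Finset.Icc 1 ⌊t⌋₊, (vonMangoldt k - 1) * Real.log k) / t ^ 2 *
        t ^ (-ε) : ℝ) : ℂ) := by
    rw [← integral_complex_ofReal]
    refine setIntegral_congr_fun measurableSet_Ioi fun t ht ↦ ?_
    have ht0 : (0 : ℝ) < t := zero_lt_one.trans ht
    simp only [hcr, ← Complex.ofReal_sum]
    rw [show (-(((1 + ε : ℝ) : ℂ) + 1)) = ((-2 + -ε : ℝ) : ℂ) by push_cast; ring,
      ← Complex.ofReal_cpow ht0.le, rpow_add ht0, ← Complex.ofReal_mul]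
    congr 1
    rw [rpow_neg ht0.le, rpow_two]
    ring
  rw [h3, ← Complex.ofReal_mul, Complex.ofReal_re, mul_div_cancel_left₀ _ (by positivity)]

open Asymptotics in
lemma isBigO_log_pow_div_log_sq (n : ℕ) :
    (fun t : ℝ ↦ log t ^ n) =O[atTop] fun t ↦ t / log t ^ 2 := by
  refine (((isLittleO_pow_log_id_atTop (n := n + 2)).isBigO.mul
    (isBigO_refl (fun t : ℝ ↦ (log t ^ 2)⁻¹) atTop)).congr' ?_ ?_)
  · filter_upwards [eventually_gt_atTop 1] with t ht
    have := log_pos ht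
    field_simp
    ring
  · exact Eventually.of_forall fun t ↦ rfl

open Asymptotics in
lemma isBigO_sqrt_mul_log_div_log_sq :
    (fun t : ℝ ↦ √t * log t) =O[atTop] fun t ↦ t / log t ^ 2 := by
  have h1 : (fun t : ℝ ↦ log t ^ 3) =O[atTop] fun t ↦ √t := by
    have := (isLittleO_log_rpow_rpow_atTop 3 (show (0 : ℝ) < 1 / 2 by norm_num)).isBigO
    refine this.congr (fun t ↦ ?_) fun t ↦ (sqrt_eq_rpow t).symm
    exact_mod_cast rpow_natCast (log t) 3
  refine ((((isBigO_refl (fun t : ℝ ↦ √t) atTop).mul h1).mul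
    (isBigO_refl (fun t : ℝ ↦ (log t ^ 2)⁻¹) atTop)).congr' ?_ ?_)
  · filter_upwards [eventually_gt_atTop 1] with t ht
    have := log_pos ht
    field_simp
  · filter_upwards [eventually_gt_atTop 1] with t ht
    rw [mul_self_sqrt (by linarith)]
    rfl

open Asymptotics MeasureTheory in
lemma isBigO_integral_of_isBigO_one_div_log_sq {f : ℝ → ℝ}
    (hfi : ∀ t, 2 ≤ t → IntervalIntegrable f volume 2 t)
    (hf : f =O[atTop] fun t ↦ 1 / log t ^ 2) :
    (fun t ↦ ∫ u in (2 : ℝ)..t, f u) =O[atTop] fun t ↦ t / log t ^ 2 := by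
  obtain ⟨C, hC⟩ := hf.bound
  obtain ⟨T, hT⟩ := eventually_atTop.mp (hC.and (eventually_ge_atTop 2))
  have hT2 : 2 ≤ T := (hT T le_rfl).2
  have hC' : ∀ u ≥ T, |f u| ≤ C * (1 / log u ^ 2) := fun u hu ↦ by
    simpa using (hT u hu).1
  have hC0 : 0 ≤ C := by
    have h1 := (abs_nonneg _).trans (hC' T le_rfl)
    have h2 : 0 < log T := log_pos (by linarith)
    exact nonneg_of_mul_nonneg_left h1 (by positivity)
  have hli : ∀ a b : ℝ, 2 ≤ a → 2 ≤ b →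
      IntervalIntegrable (fun u ↦ 1 / log u ^ 2) volume a b := fun a b ha hb ↦
    Chebyshev.intervalIntegrable_one_div_log_sq (by linarith) (by linarith)
  have h1 : (fun t ↦ ∫ u in T..t, f u) =O[atTop] fun t ↦ ∫ u in (2 : ℝ)..t, 1 / log u ^ 2 := by
    refine IsBigO.of_bound C ?_
    filter_upwards [eventually_ge_atTop T] with t ht
    calc ‖∫ u in T..t, f u‖ ≤ ∫ u in T..t, C * (1 / log u ^ 2) := by
          refine intervalIntegral.norm_integral_le_of_norm_le ht
            (Eventually.of_forall fun u hu ↦ hC' u hu.1.le) ((hli T t hT2 (by linarith)).const_mul C)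
      _ = C * ∫ u in T..t, 1 / log u ^ 2 := by rw [intervalIntegral.integral_const_mul]
      _ ≤ C * ∫ u in (2 : ℝ)..t, 1 / log u ^ 2 := by
          gcongr
          rw [← intervalIntegral.integral_add_adjacent_intervals (hli 2 T le_rfl hT2)
            (hli T t hT2 (by linarith))]
          have : 0 ≤ ∫ u in (2 : ℝ)..T, 1 / log u ^ 2 :=
            intervalIntegral.integral_nonneg hT2 fun u _ ↦ by positivity
          linarith
      _ ≤ _ := by
          gcongr
          exact le_abs_self _
  have h2 : (fun _ : ℝ ↦ ∫ u in (2 : ℝ)..T, f u) =O[atTop] fun t ↦ t / log t ^ 2 := by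
    refine IsBigO.trans (isBigO_const_const _ (one_ne_zero' ℝ) _) ?_
    simpa using isBigO_log_pow_div_log_sq 0
  refine (h2.add (h1.trans Chebyshev.integral_one_div_log_sq_isBigO)).congr' ?_ EventuallyEq.rfl
  filter_upwards [eventually_ge_atTop T] with t ht
  refine intervalIntegral.integral_add_adjacent_intervals (hfi T hT2) ?_
  exact (hfi T hT2).symm.trans (hfi t (by linarith))

open MeasureTheory in
lemma continuousOn_one_div_log : ContinuousOn (fun t : ℝ ↦ 1 / log t) (Set.Ioi 1) := by
  refine continuousOn_const.div (continuousOn_log.mono fun t ht ↦ ?_) fun t ht ↦ (log_pos ht).ne'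
  exact (zero_lt_one.trans (show (1 : ℝ) < t from ht)).ne'

open MeasureTheory in
lemma intervalIntegrable_one_div_log {a b : ℝ} (ha : 1 < a) (hb : 1 < b) :
    IntervalIntegrable (fun t ↦ 1 / log t) volume a b :=
  (continuousOn_one_div_log.mono fun _ ht ↦
    (lt_min ha hb).trans_le ht.1).intervalIntegrable

lemma hasDerivAt_li {x : ℝ} (hx : 1 < x) : HasDerivAt li (1 / log x) x := by
  have hc : ContinuousAt (fun t : ℝ ↦ 1 / log t) x :=
    continuousOn_one_div_log.continuousAt (Ioi_mem_nhds hx)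
  exact intervalIntegral.integral_hasDerivAt_right
    (intervalIntegrable_one_div_log one_lt_two hx)
    (continuousOn_one_div_log.stronglyMeasurableAtFilter isOpen_Ioi x hx) hc

lemma hasDerivAt_log_sq {x : ℝ} (hx : x ≠ 0) :
    HasDerivAt (fun t ↦ log t ^ 2) (2 * log x / x) x := by
  refine ((hasDerivAt_log hx).pow 2).congr_deriv ?_
  simp
  ring

open MeasureTheory in
lemma intervalIntegrable_of_continuousOn_Ioi_one {f : ℝ → ℝ} (hf : ContinuousOn f (Set.Ioi 1))
    {t : ℝ} (ht : 2 ≤ t) : IntervalIntegrable f volume 2 t :=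
  (hf.mono fun x hx ↦ by
    rw [Set.uIcc_of_le ht] at hx
    exact one_lt_two.trans_le hx.1).intervalIntegrable

lemma continuousOn_two_mul_log_div :
    ContinuousOn (fun u : ℝ ↦ 2 * log u / u) (Set.Ioi 1) := by
  have h : ∀ u ∈ Set.Ioi (1 : ℝ), u ≠ 0 := fun u hu ↦
    (zero_lt_one.trans (show (1 : ℝ) < u from hu)).ne'
  exact ((continuousOn_log.mono h).const_mul 2).div continuousOn_id h

lemma continuousOn_li : ContinuousOn li (Set.Ioi 1) := fun _ hx ↦
  (hasDerivAt_li hx).continuousAt.continuousWithinAt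

lemma integral_log_eq_li_mul_log_sq_sub {t : ℝ} (ht : 2 ≤ t) :
    ∫ u in (2 : ℝ)..t, log u =
      log t ^ 2 * li t - ∫ u in (2 : ℝ)..t, 2 * log u / u * li u := by
  have hmem : ∀ x ∈ Set.uIcc 2 t, 1 < x := fun x hx ↦ by
    rw [Set.uIcc_of_le ht] at hx
    exact one_lt_two.trans_le hx.1
  have h := intervalIntegral.integral_mul_deriv_eq_deriv_mul
    (u := fun t ↦ log t ^ 2) (v := li)
    (fun x hx ↦ hasDerivAt_log_sq (zero_lt_one.trans (hmem x hx)).ne')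
    (fun x hx ↦ hasDerivAt_li (hmem x hx))
    (intervalIntegrable_of_continuousOn_Ioi_one continuousOn_two_mul_log_div ht)
    (intervalIntegrable_one_div_log one_lt_two (by linarith))
  have h2 : li 2 = 0 := by simp [li]
  rw [h2, mul_zero, sub_zero] at h
  rw [← h]
  refine intervalIntegral.integral_congr fun x hx ↦ ?_
  have := (log_pos (hmem x hx)).ne'
  field_simp

lemma sum_indicator_prime_eq_primePi (t : ℝ) :
    ∑ k ∈ Finset.Icc 0 ⌊t⌋₊, (if k.Prime then (1 : ℝ) else 0) = primePi t := by
  rw [Finset.sum_boole, primePi, Nat.primeCounting, Nat.primeCounting', Nat.count_eq_card_filter_range,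
    Nat.range_succ_eq_Icc_zero]

open MeasureTheory in
lemma intervalIntegrable_mul_primePi {g : ℝ → ℝ} (hg : ContinuousOn g (Set.Ioi 1)) {t : ℝ}
    (ht : 2 ≤ t) : IntervalIntegrable (fun u ↦ g u * primePi u) volume 2 t := by
  rw [intervalIntegrable_iff_integrableOn_Icc_of_le ht]
  simp_rw [← sum_indicator_prime_eq_primePi]
  refine integrableOn_mul_sum_Icc _ zero_le_two (ContinuousOn.integrableOn_Icc (hg.mono ?_))
  exact fun x hx ↦ one_lt_two.trans_le hx.1

lemma sum_prime_log_sq_eq {t : ℝ} (ht : 2 ≤ t) :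
    ∑ p ∈ Finset.Icc 0 ⌊t⌋₊ with p.Prime, log p ^ 2 =
      log t ^ 2 * primePi t - ∫ u in (2 : ℝ)..t, 2 * log u / u * primePi u := by
  have hderiv : ∀ x ∈ Set.Icc 2 t, HasDerivAt (fun t ↦ log t ^ 2) (2 * log x / x) x :=
    fun x hx ↦ hasDerivAt_log_sq (by linarith [hx.1])
  have h := sum_mul_eq_sub_integral_mul₁ (𝕜 := ℝ) (fun k ↦ if k.Prime then 1 else 0)
    (f := fun t ↦ log t ^ 2) (by simp [Nat.not_prime_zero]) (by simp [Nat.not_prime_one]) t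
    (fun x hx ↦ (hderiv x hx).differentiableAt)
    (MeasureTheory.IntegrableOn.congr_fun (f := fun x ↦ 2 * log x / x)
      ((continuousOn_two_mul_log_div.mono fun x hx ↦ one_lt_two.trans_le hx.1).integrableOn_Icc)
      (fun x hx ↦ (hderiv x hx).deriv.symm) measurableSet_Icc)
  simp_rw [sum_indicator_prime_eq_primePi] at h
  rw [Finset.sum_filter, intervalIntegral.integral_of_le ht]
  calc _ = _ := by
        refine Finset.sum_congr rfl fun k _ ↦ ?_
        simp
    _ = _ := h
    _ = _ := by
        congr 1
        refine MeasureTheory.setIntegral_congr_fun measurableSet_Ioc fun x hx ↦ ?_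
        simp only [(hderiv x (Set.Ioc_subset_Icc_self hx)).deriv]

open Asymptotics ArithmeticFunction in
lemma isBigO_sum_vonMangoldt_mul_log_sub_sum_prime_log_sq :
    (fun t : ℝ ↦ ∑ k ∈ Finset.Icc 1 ⌊t⌋₊, vonMangoldt k * Real.log k -
      ∑ p ∈ Finset.Icc 0 ⌊t⌋₊ with p.Prime, Real.log p ^ 2) =O[atTop]
      fun t ↦ t / Real.log t ^ 2 := by
  refine IsBigO.trans ?_ isBigO_sqrt_mul_log_div_log_sq
  refine IsBigO.trans (IsBigO.of_bound' ?_)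
    (Chebyshev.isBigO_psi_sub_theta_sqrt.mul (isBigO_refl Real.log atTop))
  filter_upwards [eventually_ge_atTop 1] with t ht
  have h1 : ∑ k ∈ Finset.Icc 1 ⌊t⌋₊, vonMangoldt k * Real.log k -
      ∑ p ∈ Finset.Icc 0 ⌊t⌋₊ with p.Prime, Real.log p ^ 2 =
      ∑ k ∈ Finset.Ioc 0 ⌊t⌋₊ with ¬ k.Prime, vonMangoldt k * Real.log k := by
    have h2 : ∑ p ∈ Finset.Icc 0 ⌊t⌋₊ with p.Prime, Real.log p ^ 2 =
        ∑ p ∈ Finset.Ioc 0 ⌊t⌋₊ with p.Prime, vonMangoldt p * Real.log p := by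
      refine Finset.sum_congr (Finset.ext fun p ↦ ?_) fun p hp ↦ ?_
      · simp only [Finset.mem_filter, Finset.mem_Icc, Finset.mem_Ioc]
        exact ⟨fun h ↦ ⟨⟨h.2.pos, h.1.2⟩, h.2⟩, fun h ↦ ⟨⟨h.2.pos.le, h.1.2⟩, h.2⟩⟩
      · rw [vonMangoldt_apply_prime (Finset.mem_filter.mp hp).2, sq]
    rw [h2, sub_eq_iff_eq_add', ← Finset.sum_filter_add_sum_filter_not _ Nat.Prime]
    rfl
  rw [h1, norm_mul, Real.norm_of_nonneg, Real.norm_of_nonneg, Real.norm_of_nonneg, Pi.sub_apply,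
    Chebyshev.psi_sub_theta_eq_sum_not_prime, Finset.sum_mul]
  · refine Finset.sum_le_sum fun k hk ↦ ?_
    gcongr
    · simp only [Finset.mem_filter, Finset.mem_Ioc] at hk
      exact_mod_cast hk.1.1
    · simp only [Finset.mem_filter, Finset.mem_Ioc] at hk
      exact (Nat.le_floor_iff (by linarith)).mp hk.1.2
  · exact Real.log_nonneg ht
  · simpa using Chebyshev.theta_le_psi t
  · exact Finset.sum_nonneg fun k _ ↦ mul_nonneg vonMangoldt_nonneg (Real.log_natCast_nonneg k)

open Asymptotics in
lemma isBigO_sum_log_sub_integral :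
    (fun t : ℝ ↦ ∑ k ∈ Finset.Icc 1 ⌊t⌋₊, log k - ∫ u in (2 : ℝ)..t, log u) =O[atTop]
      fun t ↦ t / log t ^ 2 := by
  have hconst : (fun _ : ℝ ↦ ∫ u in (1 : ℝ)..2, log u) =O[atTop] fun t ↦ t / log t ^ 2 := by
    refine IsBigO.trans (isBigO_const_const _ (one_ne_zero' ℝ) _) ?_
    simpa using isBigO_log_pow_div_log_sq 0
  have hmain : (fun t : ℝ ↦ ∑ k ∈ Finset.Icc 1 ⌊t⌋₊, log k - ∫ u in (1 : ℝ)..t, log u) =O[atTop]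
      fun t ↦ log t ^ 1 := by
    refine IsBigO.of_bound 2 ?_
    filter_upwards [eventually_ge_atTop 1] with t ht
    have hn : 1 ≤ ⌊t⌋₊ := (Nat.one_le_floor_iff t).mpr ht
    have hnt : (⌊t⌋₊ : ℝ) ≤ t := Nat.floor_le (by linarith)
    have hn1 : (1 : ℝ) ≤ ⌊t⌋₊ := by exact_mod_cast hn
    have hmono : MonotoneOn log (Set.Icc ((1 : ℕ) : ℝ) ⌊t⌋₊) :=
      strictMonoOn_log.monotoneOn.mono fun x hx ↦ by
        have : ((1 : ℕ) : ℝ) ≤ x := hx.1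
        simp at this
        exact zero_lt_one.trans_le this
    have h1 := hmono.sum_le_integral_Ico hn
    have h2 := hmono.integral_le_sum_Ico hn
    have h3 : ∑ k ∈ Finset.Icc 1 ⌊t⌋₊, log k = ∑ k ∈ Finset.Ico 1 ⌊t⌋₊, log k + log ⌊t⌋₊ := by
      rw [← Finset.sum_Ico_succ_top hn]; rfl
    have h4 : ∑ k ∈ Finset.Icc 1 ⌊t⌋₊, log k = ∑ k ∈ Finset.Ico 1 ⌊t⌋₊, log ((k + 1 : ℕ) : ℝ) := by
      have : ∑ k ∈ Finset.Icc 1 ⌊t⌋₊, log k = ∑ k ∈ Finset.Ico 1 (⌊t⌋₊ + 1), log k := rfl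
      rw [this, Finset.sum_eq_sum_Ico_succ_bot (by omega), Finset.sum_Ico_add' (fun k : ℕ ↦ log k)]
      simp
    rw [Nat.cast_one] at h1 h2
    have h5 : ∫ u in (1 : ℝ)..t, log u =
        (∫ u in (1 : ℝ)..⌊t⌋₊, log u) + ∫ u in (⌊t⌋₊ : ℝ)..t, log u :=
      (intervalIntegral.integral_add_adjacent_intervals (by simp) (by simp)).symm
    have h6 : 0 ≤ ∫ u in (⌊t⌋₊ : ℝ)..t, log u :=
      intervalIntegral.integral_nonneg hnt fun u hu ↦ log_nonneg (hn1.trans hu.1)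
    have h7 : ∫ u in (⌊t⌋₊ : ℝ)..t, log u ≤ log t := by
      calc _ ≤ ∫ u in (⌊t⌋₊ : ℝ)..t, log t :=
            intervalIntegral.integral_mono_on hnt (by simp) (by simp) fun u hu ↦
              log_le_log (by linarith [hu.1]) hu.2
        _ = (t - ⌊t⌋₊) * log t := by simp
        _ ≤ 1 * log t := by
            gcongr
            · exact log_nonneg ht
            · linarith [Nat.lt_floor_add_one t]
        _ = log t := one_mul _
    have h8 : log ⌊t⌋₊ ≤ log t := log_le_log (by linarith) hnt
    have h9 := log_nonneg ht
    rw [pow_one, norm_of_nonneg h9, Real.norm_eq_abs, abs_le]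
    constructor <;> linarith
  refine ((hmain.trans (isBigO_log_pow_div_log_sq 1)).add hconst).congr_left fun t ↦ ?_
  have := intervalIntegral.integral_add_adjacent_intervals (μ := MeasureTheory.volume)
    (f := log) (a := 1) (b := 2) (c := t) (by simp) (by simp)
  linarith

open Asymptotics ArithmeticFunction in
lemma isBigO_sum_vonMangoldt_sub_one_mul_log_sub
    (hR : (fun x : ℝ ↦ primePi x - li x) =O[atTop] (fun x : ℝ ↦ x / (Real.log x) ^ 3)) :
    (fun t : ℝ ↦ ∑ k ∈ Finset.Icc 1 ⌊t⌋₊, (vonMangoldt k - 1) * Real.log k -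
      Real.log t ^ 2 * (primePi t - li t)) =O[atTop] fun t ↦ t / Real.log t ^ 2 := by
  have hi1 : ∀ t : ℝ, 2 ≤ t → IntervalIntegrable (fun u ↦ 2 * Real.log u / u * primePi u)
      MeasureTheory.volume 2 t := fun t ht ↦
    intervalIntegrable_mul_primePi continuousOn_two_mul_log_div ht
  have hi2 : ∀ t : ℝ, 2 ≤ t → IntervalIntegrable (fun u ↦ 2 * Real.log u / u * li u)
      MeasureTheory.volume 2 t := fun t ht ↦
    intervalIntegrable_of_continuousOn_Ioi_one (continuousOn_two_mul_log_div.mul continuousOn_li) ht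
  have hint : (fun t ↦ ∫ u in (2 : ℝ)..t,
      (2 * Real.log u / u * primePi u - 2 * Real.log u / u * li u)) =O[atTop]
      fun t ↦ t / Real.log t ^ 2 := by
    refine isBigO_integral_of_isBigO_one_div_log_sq (fun t ht ↦ (hi1 t ht).sub (hi2 t ht)) ?_
    refine ((isBigO_refl (fun u : ℝ ↦ Real.log u / u) atTop).mul hR).const_mul_left 2 |>.congr'
      (Eventually.of_forall fun u ↦ ?_) ?_
    · ring
    · filter_upwards [eventually_gt_atTop 1] with u hu
      have := Real.log_pos hu
      field_simp
  refine ((isBigO_sum_vonMangoldt_mul_log_sub_sum_prime_log_sq.sub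
    isBigO_sum_log_sub_integral).sub hint).congr' ?_ EventuallyEq.rfl
  filter_upwards [eventually_ge_atTop 2] with t ht
  rw [intervalIntegral.integral_sub (hi1 t ht) (hi2 t ht)]
  simp_rw [sub_mul, one_mul, Finset.sum_sub_distrib]
  linarith [sum_prime_log_sq_eq ht, integral_log_eq_li_mul_log_sq_sub ht]

open Asymptotics in
lemma isBigO_div_log_pow_of_le {m n : ℕ} (h : m ≤ n) :
    (fun t : ℝ ↦ t / log t ^ n) =O[atTop] fun t ↦ t / log t ^ m := by
  refine IsBigO.of_bound' ?_
  filter_upwards [eventually_ge_atTop 1, tendsto_log_atTop.eventually_ge_atTop 1] with t ht hl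
  rw [norm_of_nonneg (by positivity), norm_of_nonneg (by positivity)]
  gcongr

open Asymptotics in
lemma isBigO_li_sub_div_log :
    (fun t : ℝ ↦ li t - t / log t) =O[atTop] fun t ↦ t / log t ^ 2 := by
  have hconst : (fun _ : ℝ ↦ 2 / log 2) =O[atTop] fun t ↦ t / log t ^ 2 := by
    refine IsBigO.trans (isBigO_const_const _ (one_ne_zero' ℝ) _) ?_
    simpa using isBigO_log_pow_div_log_sq 0
  refine (Chebyshev.integral_one_div_log_sq_isBigO.sub hconst).congr' ?_ EventuallyEq.rfl
  filter_upwards [eventually_ge_atTop 2] with t ht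
  have h1 := intervalIntegrable_one_div_log one_lt_two (one_lt_two.trans_le ht)
  have h2 : IntervalIntegrable (fun u ↦ 1 / log u ^ 2) MeasureTheory.volume 2 t :=
    Chebyshev.intervalIntegrable_one_div_log_sq one_lt_two (one_lt_two.trans_le ht)
  have h := intervalIntegral.integral_eq_sub_of_hasDerivAt (f := fun t ↦ t / log t)
    (f' := fun t ↦ 1 / log t - 1 / log t ^ 2) (fun x hx ↦ ?_) (h1.sub h2)
  · rw [intervalIntegral.integral_sub h1 h2] at h
    rw [li]
    linarith
  · rw [Set.uIcc_of_le ht] at hx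
    have hx0 : x ≠ 0 := by linarith [hx.1]
    have hl : log x ≠ 0 := (log_pos (by linarith [hx.1])).ne'
    refine ((hasDerivAt_id x).div (hasDerivAt_log hx0) hl).congr_deriv ?_
    simp only [id]
    field_simp

open Asymptotics in
lemma isBigO_li_sub_li_floor :
    (fun t : ℝ ↦ li t - li ⌊t⌋₊) =O[atTop] fun _ ↦ (1 : ℝ) := by
  refine IsBigO.of_bound (1 / log 2) ?_
  filter_upwards [eventually_ge_atTop 2] with t ht
  have hf : (2 : ℝ) ≤ ⌊t⌋₊ := by exact_mod_cast Nat.le_floor (by exact_mod_cast ht)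
  have hft : (⌊t⌋₊ : ℝ) ≤ t := Nat.floor_le (by linarith)
  rw [li, li, intervalIntegral.integral_interval_sub_left
    (intervalIntegrable_one_div_log one_lt_two (by linarith))
    (intervalIntegrable_one_div_log one_lt_two (by linarith))]
  have hl := log_pos one_lt_two
  calc _ ≤ 1 / log 2 * |t - ⌊t⌋₊| := by
        refine intervalIntegral.norm_integral_le_of_norm_le_const fun x hx ↦ ?_
        rw [Set.uIoc_of_le hft] at hx
        have h2x : 2 ≤ x := hf.trans hx.1.le
        have := log_le_log two_pos h2x
        rw [norm_of_nonneg (one_div_nonneg.mpr (hl.le.trans this))]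
        gcongr
    _ ≤ 1 / log 2 * ‖(1 : ℝ)‖ := by
        gcongr
        rw [norm_one, abs_of_nonneg (by linarith)]
        linarith [Nat.lt_floor_add_one t]

open Asymptotics in
lemma isEquivalent_of_isBigO_sub_div_log {a : ℝ → ℝ}
    (ha : (fun t ↦ a t - t / log t) =O[atTop] fun t ↦ t / log t ^ 2) :
    a ~[atTop] fun t ↦ t / log t := by
  refine ha.trans_isLittleO ?_
  have h1 : (fun t : ℝ ↦ (log t)⁻¹) =o[atTop] fun _ ↦ (1 : ℝ) :=
    (isLittleO_one_iff ℝ).mpr tendsto_log_atTop.inv_tendsto_atTop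
  refine ((isBigO_refl (fun t : ℝ ↦ t / log t) atTop).mul_isLittleO h1).congr
    (fun t ↦ ?_) fun t ↦ mul_one _
  rw [sq, ← div_eq_mul_inv, div_div]

open Asymptotics in
lemma isBigO_one_div_primePi_sub_one_div_li_floor_add {B : ℝ → ℝ}
    (hR : (fun x : ℝ ↦ primePi x - li x) =O[atTop] (fun x : ℝ ↦ x / log x ^ 3))
    (hB : (fun t ↦ B t - log t ^ 2 * (primePi t - li t)) =O[atTop] fun t ↦ t / log t ^ 2) :
    (fun t ↦ 1 / primePi t - 1 / li ⌊t⌋₊ + B t / t ^ 2) =O[atTop]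
      fun t ↦ 1 / (t * log t ^ 2) := by
  have h1 : (fun _ : ℝ ↦ (1 : ℝ)) =O[atTop] fun t ↦ t / log t ^ 3 := by
    refine ((isBigO_log_pow_div_log_sq 1).mul
      (isBigO_refl (fun t : ℝ ↦ (log t)⁻¹) atTop)).congr' ?_ ?_
    · filter_upwards [eventually_gt_atTop 1] with t ht
      have := log_pos ht
      field_simp
    · exact Eventually.of_forall fun t ↦ by ring
  have hlf := isBigO_li_sub_li_floor.trans h1
  have hd : (fun t : ℝ ↦ primePi t - li ⌊t⌋₊) =O[atTop] fun t ↦ t / log t ^ 3 :=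
    (hR.add hlf).congr_left fun t ↦ by ring
  have h23 := isBigO_div_log_pow_of_le (show 2 ≤ 3 by norm_num)
  have hb : (fun t : ℝ ↦ li ⌊t⌋₊ - t / log t) =O[atTop] fun t ↦ t / log t ^ 2 :=
    (isBigO_li_sub_div_log.sub (hlf.trans h23)).congr_left fun t ↦ by ring
  have ha : (fun t : ℝ ↦ primePi t - t / log t) =O[atTop] fun t ↦ t / log t ^ 2 :=
    (hb.add (hd.trans h23)).congr_left fun t ↦ by ring
  have hea := isEquivalent_of_isBigO_sub_div_log ha
  have heb := isEquivalent_of_isBigO_sub_div_log hb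
  have ha' : (fun t ↦ 1 / primePi t) =O[atTop] fun t ↦ log t / t :=
    hea.inv.isBigO.congr (fun t ↦ (one_div _).symm) fun t ↦ inv_div _ _
  have hb' : (fun t : ℝ ↦ 1 / li ⌊t⌋₊) =O[atTop] fun t ↦ log t / t :=
    heb.inv.isBigO.congr (fun t ↦ (one_div _).symm) fun t ↦ inv_div _ _
  have hB' : (fun t ↦ B t - log t ^ 2 * (primePi t - li ⌊t⌋₊)) =O[atTop]
      fun t ↦ t / log t ^ 2 := by
    refine (hB.sub (((isBigO_refl (fun t : ℝ ↦ log t ^ 2) atTop).mul isBigO_li_sub_li_floor).trans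
      ?_)).congr_left fun t ↦ by ring
    simpa using isBigO_log_pow_div_log_sq 2
  have hfst : (fun t ↦ (B t - log t ^ 2 * (primePi t - li ⌊t⌋₊)) * (1 / t ^ 2)) =O[atTop]
      fun t ↦ 1 / (t * log t ^ 2) := by
    refine (hB'.mul (isBigO_refl (fun t : ℝ ↦ 1 / t ^ 2) atTop)).congr' EventuallyEq.rfl ?_
    filter_upwards [eventually_gt_atTop 1] with t ht
    have := log_pos ht
    field_simp
  have hsnd : (fun t ↦ (primePi t - li ⌊t⌋₊) * (log t / t) * ((li ⌊t⌋₊ - t / log t) *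
      (1 / li ⌊t⌋₊) * (log t / t) + (primePi t - t / log t) * (1 / primePi t) *
      (1 / li ⌊t⌋₊))) =O[atTop] fun t ↦ 1 / (t * log t ^ 2) := by
    have hr := isBigO_refl (fun t : ℝ ↦ log t / t) atTop
    refine ((hd.mul hr).mul (((hb.mul hb').mul hr).add ((ha.mul ha').mul hb'))).congr'
      EventuallyEq.rfl ?_
    filter_upwards [eventually_gt_atTop 1] with t ht
    have := log_pos ht
    field_simp
  refine (hfst.add hsnd).congr' ?_ EventuallyEq.rfl
  filter_upwards [eventually_gt_atTop 1, hea.isBigO_symm.eq_zero_imp,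
    heb.isBigO_symm.eq_zero_imp] with t ht h1 h2
  have := log_pos ht
  have ht0 : t / log t ≠ 0 := by positivity
  have h1' := mt h1 ht0
  have h2' := mt h2 ht0
  field_simp
  ring

open ArithmeticFunction in
lemma isBigO_sum_vonMangoldt_sub_one_mul_log
    (hR : (fun x : ℝ ↦ primePi x - li x) =O[atTop] (fun x : ℝ ↦ x / (Real.log x) ^ 3)) :
    (fun t : ℝ ↦ ∑ k ∈ Finset.Icc 1 ⌊t⌋₊, (vonMangoldt k - 1) * Real.log k) =O[atTop]
      fun t ↦ t / Real.log t := by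
  have h12 := isBigO_div_log_pow_of_le (show 1 ≤ 2 by norm_num)
  have h : (fun t ↦ Real.log t ^ 2 * (primePi t - li t)) =O[atTop] fun t ↦ t / Real.log t ^ 1 := by
    refine ((Asymptotics.isBigO_refl (fun t ↦ Real.log t ^ 2) atTop).mul hR).congr'
      EventuallyEq.rfl ?_
    filter_upwards [eventually_gt_atTop 1] with t ht
    have := Real.log_pos ht
    field_simp
  refine (((isBigO_sum_vonMangoldt_sub_one_mul_log_sub hR).trans h12).add h).congr
    (fun t ↦ by ring) fun t ↦ by rw [pow_one]

open MeasureTheory in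
lemma locallyIntegrableOn_comp_floor_mul (c : ℕ → ℝ) {g : ℝ → ℝ} {a : ℝ}
    (hg : ContinuousOn g (Set.Ici a)) :
    LocallyIntegrableOn (fun t : ℝ ↦ c ⌊t⌋₊ * g t) (Set.Ici a) := by
  refine (locallyIntegrableOn_iff isClosed_Ici.isLocallyClosed).mpr fun k hk hkc ↦ ?_
  refine IntegrableOn.mul_continuousOn ?_ (hg.mono hk) hkc
  obtain ⟨T, hT⟩ := hkc.bddAbove
  refine Measure.integrableOn_of_bounded (M := ∑ i ∈ Finset.range (⌊T⌋₊ + 1), |c i|)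
    hkc.measure_lt_top.ne
    ((measurable_from_nat.comp Nat.measurable_floor).aestronglyMeasurable) ?_
  refine (ae_restrict_iff' hkc.measurableSet).mpr (Eventually.of_forall fun t ht ↦ ?_)
  exact Finset.single_le_sum (f := fun i ↦ |c i|) (fun _ _ ↦ abs_nonneg _)
    (Finset.mem_range.mpr (Nat.lt_succ_of_le (Nat.floor_mono (hT ht))))

open MeasureTheory in
lemma integral_comp_floor_eq_sum (c : ℕ → ℝ) {m n : ℕ} (hmn : m ≤ n) :
    ∫ t in (m : ℝ)..n, c ⌊t⌋₊ = ∑ k ∈ Finset.Ico m n, c k := by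
  have hae : ∀ k : ℕ, ∀ᵐ t : ℝ, t ∈ Set.uIoc (k : ℝ) (k + 1 : ℕ) → c ⌊t⌋₊ = c k := fun k ↦ by
    filter_upwards [Measure.ae_ne volume ((k + 1 : ℕ) : ℝ)] with t hne ht
    rw [Set.uIoc_of_le (by simp)] at ht
    rw [(Nat.floor_eq_iff (k.cast_nonneg.trans ht.1.le)).mpr
      ⟨ht.1.le, by exact_mod_cast lt_of_le_of_ne ht.2 hne⟩]
  rw [← intervalIntegral.sum_integral_adjacent_intervals_Ico (a := fun k : ℕ ↦ (k : ℝ)) hmn]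
  · refine Finset.sum_congr rfl fun k _ ↦ ?_
    rw [intervalIntegral.integral_congr_ae (hae k)]
    simp
  · intro k _
    refine (intervalIntegrable_const (c := c k)).congr_ae ?_
    refine (ae_restrict_iff' measurableSet_uIoc).mpr ?_
    filter_upwards [hae k] with t ht htm using (ht htm).symm

open MeasureTheory in
lemma integrableAtFilter_one_div_mul_log_sq :
    IntegrableAtFilter (fun t : ℝ ↦ 1 / (t * log t ^ 2)) atTop := by
  have hmem : ∀ x ∈ Set.Ici (2 : ℝ), 0 < x ∧ 0 < log x := fun x hx ↦ by
    have hx : 2 ≤ x := hx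
    exact ⟨by linarith, log_pos (by linarith)⟩
  have hderiv : ∀ x ∈ Set.Ici (2 : ℝ), HasDerivAt (fun t ↦ -(log t)⁻¹) (1 / (x * log x ^ 2)) x :=
    fun x hx ↦ by
      obtain ⟨h0, hl⟩ := hmem x hx
      refine ((hasDerivAt_log h0.ne').fun_inv hl.ne').neg.congr_deriv ?_
      field_simp
  exact ⟨Set.Ioi 2, Ioi_mem_atTop 2, integrableOn_Ioi_deriv_of_nonneg' (l := -0) hderiv
    (fun x hx ↦ by
      obtain ⟨h0, hl⟩ := hmem x (Set.Ioi_subset_Ici_self hx)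
      positivity) tendsto_log_atTop.inv_tendsto_atTop.neg⟩

open MeasureTheory Topology ArithmeticFunction in
lemma exists_tendsto_setIntegral_sum_vonMangoldt_sub_one_mul_log
    (hB : (fun t : ℝ ↦ ∑ k ∈ Finset.Icc 1 ⌊t⌋₊, (vonMangoldt k - 1) * Real.log k) =O[atTop]
      fun t ↦ t / Real.log t) :
    ∃ L : ℝ, Tendsto (fun T : ℝ ↦ ∫ t in Set.Ioc 1 T,
      (∑ k ∈ Finset.Icc 1 ⌊t⌋₊, (vonMangoldt k - 1) * Real.log k) / t ^ 2) atTop (𝓝 L) := by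
  have hB1 : (fun t : ℝ ↦ ∑ k ∈ Finset.Icc 1 ⌊t⌋₊, (vonMangoldt k - 1) * Real.log k) =O[atTop]
      fun t ↦ t := hB.trans (by simpa using isBigO_div_log_pow_of_le (zero_le_one' ℕ))
  obtain ⟨L, hL⟩ := exists_tendsto_mellin_sum_vonMangoldt_sub_one_mul_log hB1
  obtain ⟨C, hC⟩ := hB.bound
  obtain ⟨T, hT⟩ := eventually_atTop.mp hC
  set K : ℝ := ∑ k ∈ Finset.Icc 1 ⌊T⌋₊, |(vonMangoldt k - 1) * Real.log k|
  refine ⟨L, tendsto_setIntegral_of_tendsto_mellin (C := max C K) (fun ε hε ↦ ?_)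
    (fun t ht ↦ ?_) hL⟩
  · have hne : ∀ t ∈ Set.Ici (1 : ℝ), t ≠ 0 := fun t ht ↦ (zero_lt_one.trans_le ht).ne'
    have hc : ContinuousOn (fun t : ℝ ↦ (t ^ 2)⁻¹ * t ^ (-ε)) (Set.Ici 1) :=
      ((continuousOn_pow 2).inv₀ fun t ht ↦ pow_ne_zero 2 (hne t ht)).mul
        (continuousOn_id.rpow_const fun t ht ↦ Or.inl (hne t ht))
    have hloc := locallyIntegrableOn_comp_floor_mul
      (fun n ↦ ∑ k ∈ Finset.Icc 1 n, (vonMangoldt k - 1) * Real.log k) hc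
    refine ((hloc.integrableOn_of_isBigO_atTop (g := fun t ↦ t ^ (-1 - ε)) ?_ ?_).mono_set
      Set.Ioi_subset_Ici_self).congr_fun (fun t _ ↦ ?_) measurableSet_Ioi
    · refine (hB1.mul (Asymptotics.isBigO_refl _ atTop)).congr' EventuallyEq.rfl ?_
      filter_upwards [eventually_gt_atTop 0] with t ht
      rw [rpow_sub ht, rpow_neg_one, rpow_neg ht.le]
      field_simp
    · exact integrableAtFilter_rpow_atTop_iff.mpr (by linarith)
    · simp only [div_eq_mul_inv, mul_assoc]
  · have hl := Real.log_pos ht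
    rw [abs_div, abs_of_nonneg (sq_nonneg t), div_le_div_iff₀ (by positivity) (by positivity)]
    suffices h : |∑ k ∈ Finset.Icc 1 ⌊t⌋₊, (vonMangoldt k - 1) * Real.log k| * Real.log t ≤
        max C K * t by nlinarith
    rcases le_total T t with hTt | hTt
    · have h := hT t hTt
      rw [Real.norm_eq_abs, Real.norm_of_nonneg (by positivity), ← mul_div_assoc,
        le_div_iff₀ hl] at h
      exact h.trans (by gcongr; exact le_max_left C K)
    · have hK0 : 0 ≤ K := Finset.sum_nonneg fun _ _ ↦ abs_nonneg _
      refine (mul_le_mul ((Finset.abs_sum_le_sum_abs _ _).trans ?_)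
        (Real.log_le_self (by linarith)) hl.le hK0).trans
        (by gcongr; exact le_max_right C K)
      exact Finset.sum_le_sum_of_subset_of_nonneg
        (Finset.Icc_subset_Icc_right (Nat.floor_mono hTt)) fun _ _ _ ↦ abs_nonneg _

open MeasureTheory Topology ArithmeticFunction in
lemma exists_tendsto_integral_one_div_primePi_sub_one_div_li
    (hR : (fun x : ℝ ↦ primePi x - li x) =O[atTop] (fun x : ℝ ↦ x / (Real.log x) ^ 3)) :
    ∃ L : ℝ, Tendsto (fun T : ℝ ↦ ∫ t in (3 : ℝ)..T, (1 / primePi t - 1 / li ⌊t⌋₊))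
      atTop (𝓝 L) := by
  set B : ℝ → ℝ := fun t ↦ ∑ k ∈ Finset.Icc 1 ⌊t⌋₊, (vonMangoldt k - 1) * Real.log k
  have hW : LocallyIntegrableOn (fun t ↦ 1 / primePi t - 1 / li ⌊t⌋₊) (Set.Ici 1) := by
    simpa [primePi] using locallyIntegrableOn_comp_floor_mul
      (fun n ↦ 1 / (n.primeCounting : ℝ) - 1 / li n) (continuousOn_const (c := (1 : ℝ)))
  have hBl : LocallyIntegrableOn (fun t ↦ B t / t ^ 2) (Set.Ici 1) := by
    refine locallyIntegrableOn_comp_floor_mul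
      (fun n ↦ ∑ k ∈ Finset.Icc 1 n, (vonMangoldt k - 1) * Real.log k)
      ((continuousOn_pow 2).inv₀ fun t ht ↦ pow_ne_zero 2 (zero_lt_one.trans_le ht).ne')
  have hii : ∀ {f : ℝ → ℝ}, LocallyIntegrableOn f (Set.Ici 1) → ∀ {a b : ℝ}, 1 ≤ a → 1 ≤ b →
      IntervalIntegrable f volume a b := fun hf a b ha hb ↦
    (hf.integrableOn_compact_subset (fun x hx ↦ (le_min ha hb).trans hx.1)
      isCompact_uIcc).intervalIntegrable
  have hsum : IntegrableOn (fun t ↦ 1 / primePi t - 1 / li ⌊t⌋₊ + B t / t ^ 2) (Set.Ici 1) :=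
    (hW.add hBl).integrableOn_of_isBigO_atTop
      (isBigO_one_div_primePi_sub_one_div_li_floor_add hR
        (isBigO_sum_vonMangoldt_sub_one_mul_log_sub hR)) integrableAtFilter_one_div_mul_log_sq
  obtain ⟨L, hL⟩ := exists_tendsto_setIntegral_sum_vonMangoldt_sub_one_mul_log
    (isBigO_sum_vonMangoldt_sub_one_mul_log hR)
  have h1 := intervalIntegral_tendsto_integral_Ioi 3
    (hsum.mono_set fun x (hx : 3 < x) ↦ (show (1 : ℝ) ≤ x by linarith)) tendsto_id
  refine ⟨_, ((h1.sub hL).add_const (∫ t in (1 : ℝ)..3, B t / t ^ 2)).congr' ?_⟩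
  filter_upwards [eventually_ge_atTop 3] with T hT
  have h13 := hii hBl (a := 1) (b := 3) le_rfl (by norm_num)
  have h3T := hii hBl (a := 3) (b := T) (by norm_num) (by linarith)
  rw [← intervalIntegral.integral_of_le (by linarith), id,
    intervalIntegral.integral_add (hii hW (by norm_num) (by linarith)) h3T]
  have := intervalIntegral.integral_add_adjacent_intervals h13 h3T
  linarith

theorem difference_converges
    (hR : (fun x : ℝ => primePi x - li x)
      =O[atTop] (fun x : ℝ => x / (Real.log x) ^ 3)) :
    ∃ L : ℝ, Filter.Tendsto
      (fun x : ℝ => (∑ n ∈ Finset.Icc 2 ⌊x⌋₊, 1 / (Nat.primeCounting n : ℝ)) -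
        ∑ n ∈ Finset.Icc 3 ⌊x⌋₊, 1 / li n)
      atTop (nhds L) := by
  obtain ⟨L, hL⟩ := exists_tendsto_integral_one_div_primePi_sub_one_div_li hR
  have hfloor : Tendsto (fun x : ℝ ↦ ((⌊x⌋₊ + 1 : ℕ) : ℝ)) atTop atTop :=
    tendsto_natCast_atTop_atTop.comp ((tendsto_add_atTop_nat 1).comp tendsto_nat_floor_atTop)
  refine ⟨_, ((hL.comp hfloor).const_add (1 / (Nat.primeCounting 2 : ℝ))).congr' ?_⟩
  filter_upwards [eventually_ge_atTop 2] with x hx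
  have hn : 2 ≤ ⌊x⌋₊ := Nat.le_floor (by exact_mod_cast hx)
  have h := integral_comp_floor_eq_sum (fun n ↦ 1 / (n.primeCounting : ℝ) - 1 / li n)
    (show 3 ≤ ⌊x⌋₊ + 1 by omega)
  rw [Finset.sum_sub_distrib] at h
  have hbot : ∑ n ∈ Finset.Icc 2 ⌊x⌋₊, 1 / (Nat.primeCounting n : ℝ) =
      1 / (Nat.primeCounting 2 : ℝ) + ∑ n ∈ Finset.Ico 3 (⌊x⌋₊ + 1), 1 / (Nat.primeCounting n : ℝ) :=
    Finset.sum_eq_sum_Ico_succ_bot (by omega) _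
  rw [hbot, add_sub_assoc]
  exact congrArg _ h
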